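/- arXiv:1607.06294 — 6 statements merged into one kernel-verified Lean document; each statement's English description precedes it below -/
import Mathlib

section
/- Let H be a hierarchical clustering method that satisfies the Axiom of Transformation (A2). Then H satisfies the Axiom of Value (A1) if and only if H satisfies the Extended Axiom of Value (A1'). -/
noncomputable section

/-- A dissimilarity function on a node set: nonnegative and zero exactly on the diagonal.
It need not be symmetric nor satisfy the triangle inequality. -/
def IsDissim {X : Type} (A : X → X → ℝ) : Prop :=
  (∀ x x', 0 ≤ A x x') ∧ (∀ x x', A x x' = 0 ↔ x = x')

/-- A symmetric dissimilarity. -/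
def IsSym {X : Type} (A : X → X → ℝ) : Prop := ∀ x x', A x x' = A x' x

/-- An ultrametric: nonnegative, zero exactly on the diagonal, symmetric, and
satisfying the strong triangle inequality. -/
def IsUltrametric {X : Type} (u : X → X → ℝ) : Prop :=
  (∀ x x', 0 ≤ u x x') ∧ (∀ x x', u x x' = 0 ↔ x = x') ∧
    (∀ x x', u x x' = u x' x) ∧
    (∀ x x' x'', u x x'' ≤ max (u x x') (u x' x''))

/-- The cost of the chain `x :: l`: the maximum dissimilarity over consecutive links. -/
def chainCost {X : Type} (A : X → X → ℝ) : X → List X → ℝ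
  | _, [] => 0
  | x, y :: l => max (A x y) (chainCost A y l)

/-- The set of costs of chains from `x` to `x'`. -/
def chainCosts {X : Type} (A : X → X → ℝ) (x x' : X) : Set ℝ :=
  {c | ∃ l : List X, (x :: l).getLast (List.cons_ne_nil x l) = x' ∧ chainCost A x l = c}

/-- The directed minimum chain cost `ũ*_X(x,x')`: minimum cost over all chains from `x` to `x'`. -/
def minChainCost {X : Type} (A : X → X → ℝ) (x x' : X) : ℝ :=
  sInf (chainCosts A x x')

/-- The nonreciprocal ultrametric `u^NR`. -/
def nonrecipUltra {X : Type} (A : X → X → ℝ) (x x' : X) : ℝ :=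
  max (minChainCost A x x') (minChainCost A x' x)

/-- The reciprocal ultrametric `u^R`. -/
def recipUltra {X : Type} (A : X → X → ℝ) (x x' : X) : ℝ :=
  minChainCost (fun a b => max (A a b) (A b a)) x x'

/-- The unilateral ultrametric `u^U`. -/
def uniUltra {X : Type} (A : X → X → ℝ) (x x' : X) : ℝ :=
  minChainCost (fun a b => min (A a b) (A b a)) x x'

/-- The minimum loop cost `mlc(X, A_X)`: minimum cost over loops, i.e. chains from some
node `x` back to itself containing at least one node different from `x`. -/
def mlc {X : Type} (A : X → X → ℝ) : ℝ :=
  sInf {c | ∃ (x : X) (l : List X),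
    (x :: l).getLast (List.cons_ne_nil x l) = x ∧ (∃ y ∈ l, y ≠ x) ∧ chainCost A x l = c}

/-- The separation `sep(X, A_X)`: minimum dissimilarity over pairs of distinct nodes. -/
def sep {X : Type} (A : X → X → ℝ) : ℝ :=
  sInf {c | ∃ x x' : X, x ≠ x' ∧ A x x' = c}

/-- A hierarchical clustering method: assigns to every (finite) network an output
two-variable function on the same node set. -/
abbrev HCMethod := ∀ (X : Type) [Fintype X], (X → X → ℝ) → X → X → ℝ

/-- A hierarchical clustering method outputs an ultrametric on every network. -/
def IsHCMethod (H : HCMethod) : Prop :=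
  ∀ (X : Type) [Fintype X] (A : X → X → ℝ), IsDissim A → IsUltrametric (H X A)

/-- `p, q` are the two (distinct) nodes of a two-node set. -/
def TwoNode {X : Type} (p q : X) : Prop := p ≠ q ∧ ∀ x : X, x = p ∨ x = q

/-- Axiom of Value (A1): on every two-node network the output clusters the two nodes at
the maximum of the two dissimilarities. -/
def AxiomValue (H : HCMethod) : Prop :=
  ∀ (X : Type) [Fintype X] (p q : X), TwoNode p q →
    ∀ A : X → X → ℝ, IsDissim A → H X A p q = max (A p q) (A q p)

/-- Axiom of Transformation (A2): dissimilarity-reducing maps do not increase output values. -/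
def AxiomTransform (H : HCMethod) : Prop :=
  ∀ (X Y : Type) [Fintype X] [Fintype Y] (AX : X → X → ℝ) (AY : Y → Y → ℝ),
    IsDissim AX → IsDissim AY →
    ∀ φ : X → Y, (∀ x x', AY (φ x) (φ x') ≤ AX x x') →
    ∀ x x' : X, H Y AY (φ x) (φ x') ≤ H X AX x x'

/-- The canonical dissimilarity `A_{n,α,β}` on `Fin n`: `α` for `i > j`, `β` for `i < j`,
`0` on the diagonal. -/
def canonDissim (n : ℕ) (α β : ℝ) : Fin n → Fin n → ℝ :=
  fun i j => if i = j then 0 else if j < i then α else β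

/-- Extended Axiom of Value (A1'): on every permuted canonical network `Δ_n(α,β,Π)` the
output ultrametric equals `max(α,β)` off the diagonal. -/
def ExtAxiomValue (H : HCMethod) : Prop :=
  ∀ (n : ℕ) (α β : ℝ), 0 < α → 0 < β → ∀ π : Equiv.Perm (Fin n),
    ∀ i j : Fin n, i ≠ j →
      H (Fin n) (fun i j => canonDissim n α β (π i) (π j)) i j = max α β

/-- Alternative Axiom of Value (A1''): on every two-node network the output clusters the
two nodes at the minimum of the two dissimilarities. -/
def AltAxiomValue (H : HCMethod) : Prop :=
  ∀ (X : Type) [Fintype X] (p q : X), TwoNode p q →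
    ∀ A : X → X → ℝ, IsDissim A → H X A p q = min (A p q) (A q p)

/-- Agnostic Axiom of Value (A1'''): on every two-node network the output value lies
between the minimum and maximum of the two dissimilarities. -/
def AgnAxiomValue (H : HCMethod) : Prop :=
  ∀ (X : Type) [Fintype X] (p q : X), TwoNode p q →
    ∀ A : X → X → ℝ, IsDissim A →
      min (A p q) (A q p) ≤ H X A p q ∧ H X A p q ≤ max (A p q) (A q p)

/-- The two-node network on `Bool`. -/
def boolDissim (a b : ℝ) : Bool → Bool → ℝ :=
  fun x y => if x = y then 0 else if x = false then a else b

theorem boolDissim_isDissim {a b : ℝ} (ha : 0 < a) (hb : 0 < b) :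
    IsDissim (boolDissim a b) := by
  constructor
  · intro x y
    unfold boolDissim
    split_ifs <;> linarith
  · intro x y
    unfold boolDissim
    split_ifs with h1 h2
    · simp [h1]
    · simp [h1, ha.ne']
    · simp [h1, hb.ne']

theorem canon_isDissim {n : ℕ} {a b : ℝ} (ha : 0 < a) (hb : 0 < b) (π : Equiv.Perm (Fin n)) :
    IsDissim (fun i j => canonDissim n a b (π i) (π j)) := by
  constructor
  · intro x y
    simp only [canonDissim]
    split_ifs <;> linarith
  · intro x y
    simp only [canonDissim]
    split_ifs with h1 h2
    · simpa using h1
    · simpa [ha.ne'] using h1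
    · simpa [hb.ne'] using h1

theorem ext_lower (H : HCMethod) (hA2 : AxiomTransform H) (hV : AxiomValue H)
    {n : ℕ} {a b : ℝ} (ha : 0 < a) (hb : 0 < b) (π : Equiv.Perm (Fin n)) (i j : Fin n)
    (hij : π i < π j) :
    max a b ≤ H (Fin n) (fun i j => canonDissim n a b (π i) (π j)) i j := by
  have hD := boolDissim_isDissim hb ha
  have h := hA2 (Fin n) Bool _ _ (canon_isDissim ha hb π) hD (fun k => decide (π j ≤ π k))
    (by
      intro x y
      have hxy : x = y ↔ π x = π y := by simp
      simp only [boolDissim, canonDissim]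
      by_cases hx : π j ≤ π x <;> by_cases hy : π j ≤ π y <;> simp only [hx, hy] <;>
        simp <;> split_ifs <;> first | linarith | (exfalso; grind)) i j
  have hv := hV Bool false true ⟨by simp, by simp⟩ _ hD
  have e : decide (π j ≤ π i) = false := by simpa using hij
  simp only [e, le_refl, decide_true, hv] at h
  simpa [boolDissim, max_comm] using h

/-- A method satisfying (A2) satisfies the Axiom of Value (A1) if and only if
it satisfies the Extended Axiom of Value (A1'). -/
theorem axiomValue_iff_extAxiomValue
    (H : HCMethod) (hH : IsHCMethod H) (hA2 : AxiomTransform H) :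
    AxiomValue H ↔ ExtAxiomValue H := by
  constructor
  · intro hV n a b ha hb π i j hij
    have hC := canon_isDissim ha hb π
    apply le_antisymm
    · have hM : 0 < max a b := lt_max_of_lt_left ha
      have hD := boolDissim_isDissim hM hM
      have h := hA2 Bool (Fin n) _ _ hD hC (fun x => if x = false then i else j)
        (by
          have h1 := le_max_left a b
          have h2 := le_max_right a b
          intro x y
          cases x <;> cases y <;> simp [boolDissim, canonDissim, -le_sup_iff] <;>
            split_ifs <;> linarith)
        false true
      have hv := hV Bool false true ⟨by simp, by simp⟩ _ hD
      rw [hv] at h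
      simpa [boolDissim] using h
    · rcases lt_or_gt_of_ne (fun h => hij (π.injective h) : π i ≠ π j) with h | h
      · exact ext_lower H hA2 hV ha hb π i j h
      · rw [(hH _ _ hC).2.2.1 i j]
        exact ext_lower H hA2 hV ha hb π j i h
  · intro hE X _ p q hpq A hA
    obtain ⟨hne, hall⟩ := hpq
    have hpos : ∀ x y, x ≠ y → 0 < A x y := fun x y h =>
      lt_of_le_of_ne (hA.1 x y) (fun e => h ((hA.2 x y).1 e.symm))
    have ha := hpos q p hne.symm
    have hb := hpos p q hne
    have hd : ∀ x, A x x = 0 := fun x => (hA.2 x x).2 rfl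
    have hC := canon_isDissim (n := 2) ha hb (Equiv.refl _)
    have hv := hE 2 _ _ ha hb (Equiv.refl _) 0 1 (by simp)
    classical
    have h1 := hA2 (Fin 2) X _ _ hC hA (fun x => if x = 0 then p else q)
      (by
        intro x y
        fin_cases x <;> fin_cases y <;> simp [canonDissim, hd]) 0 1
    have h2 := hA2 X (Fin 2) _ _ hA hC (fun x => if x = p then 0 else 1)
      (by
        intro x y
        rcases hall x with rfl | rfl <;> rcases hall y with rfl | rfl <;>
          simp [canonDissim, hd, hne, hne.symm]) p q
    rw [hv] at h1
    simp only [if_true, hne.symm, if_false] at h2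
    rw [hv] at h2
    rw [max_comm]
    exact le_antisymm (by simpa using h1) h2
end
end

section
/- If a hierarchical clustering method H satisfies the Axiom of Value (A1) and the Axiom of Transformation (A2), then H satisfies the Property of Influence (P1): for every network (X, A_X) and every pair of distinct nodes x ≠ x', the output ultrametric satisfies u_X(x,x') ≥ mlc(X, A_X). -/
noncomputable section

theorem chainCost_nonneg_aux {X : Type} (A : X → X → ℝ) (l : List X) :
    ∀ x, 0 ≤ chainCost A x l := by
  induction l with
  | nil => intro x; exact le_refl _
  | cons y l ih => intro x; exact le_max_of_le_right (ih y)

theorem reach_chain_aux {X : Type} (A : X → X → ℝ) (δ : ℝ) (a b c : X)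
    (h : Relation.ReflTransGen (fun u v => A u v < δ) a b) (l : List X)
    (hl : chainCost A b l < δ) (hc : (b :: l).getLast (List.cons_ne_nil b l) = c) :
    ∃ l' : List X, chainCost A a l' < δ ∧
      (a :: l').getLast (List.cons_ne_nil a l') = c ∧ b ∈ a :: l' := by
  induction h using Relation.ReflTransGen.head_induction_on with
  | refl => exact ⟨l, hl, hc, by simp⟩
  | head h1 h2 ih =>
    obtain ⟨l', h3, h4, h5⟩ := ih
    refine ⟨_ :: l', max_lt h1 h3, ?_, List.mem_cons_of_mem _ h5⟩
    rw [List.getLast_cons (List.cons_ne_nil _ _)]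
    exact h4

theorem no_reach_aux {X : Type} (A : X → X → ℝ) (hd : 0 < mlc A) (x x' : X) (hxx : x ≠ x')
    (h1 : Relation.ReflTransGen (fun u v => A u v < mlc A) x x')
    (h2 : Relation.ReflTransGen (fun u v => A u v < mlc A) x' x) : False := by
  obtain ⟨l, a1, a2, -⟩ := reach_chain_aux A _ x' x x h2 [] hd rfl
  obtain ⟨l', b1, b2, b3⟩ := reach_chain_aux A _ x x' x h1 l a1 a2
  have hm : x' ∈ l' := by
    rcases List.mem_cons.1 b3 with h | h
    · exact absurd h.symm hxx
    · exact h
  have : mlc A ≤ chainCost A x l' := by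
    apply csInf_le
    · refine ⟨0, ?_⟩
      rintro c ⟨y, k, -, -, rfl⟩
      exact chainCost_nonneg_aux A k y
    · exact ⟨x, l', b2, ⟨x', hm, hxx.symm⟩, rfl⟩
  linarith

theorem sep_pos_aux {X : Type} [Fintype X] (A : X → X → ℝ) (hA : IsDissim A) :
    ∃ m : ℝ, 0 < m ∧ ∀ y z, y ≠ z → m ≤ A y z := by
  classical
  let S : Finset ℝ := insert 1
    ((Finset.univ.filter (fun p : X × X => p.1 ≠ p.2)).image (fun p => A p.1 p.2))
  have hS : S.Nonempty := ⟨1, Finset.mem_insert_self _ _⟩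
  refine ⟨S.min' hS, ?_, ?_⟩
  · have h := S.min'_mem hS
    rcases Finset.mem_insert.1 h with h | h
    · rw [h]; exact one_pos
    · obtain ⟨p, hp, hp2⟩ := Finset.mem_image.1 h
      rw [← hp2]
      have hne : p.1 ≠ p.2 := (Finset.mem_filter.1 hp).2
      exact lt_of_le_of_ne (hA.1 _ _) (fun h0 => hne ((hA.2 _ _).1 h0.symm))
  · intro y z hyz
    apply Finset.min'_le
    apply Finset.mem_insert_of_mem
    exact Finset.mem_image.2 ⟨(y, z), by simp [hyz], rfl⟩

/-- If `x'` does not reach `x` through links cheaper than `mlc`, cut the network in two. -/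
theorem cut_aux (H : HCMethod) (hA1 : AxiomValue H) (hA2 : AxiomTransform H)
    (X : Type) [Fintype X] (A : X → X → ℝ) (hA : IsDissim A) (d : ℝ) (hd : 0 < d) (x x' : X)
    (h : ¬ Relation.ReflTransGen (fun u v => A u v < d) x' x) :
    d ≤ H X A x x' := by
  classical
  obtain ⟨m, hm, hmA⟩ := sep_pos_aux A hA
  let B : Bool → Bool → ℝ := fun a b => if a = b then 0 else if a = true then m else d
  have hB : IsDissim B := by
    constructor
    · intro a b; cases a <;> cases b <;> simp [B, hm.le, hd.le]
    · intro a b; cases a <;> cases b <;> simp [B, hm.ne', hd.ne']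
  let φ : X → Bool := fun y => decide (Relation.ReflTransGen (fun u v => A u v < d) y x)
  have hφ : ∀ y z, B (φ y) (φ z) ≤ A y z := by
    intro y z
    by_cases hy : Relation.ReflTransGen (fun u v => A u v < d) y x <;>
    by_cases hz : Relation.ReflTransGen (fun u v => A u v < d) z x
    · simp [B, φ, hy, hz, hA.1]
    · have : y ≠ z := by rintro rfl; exact hz hy
      simpa [B, φ, hy, hz] using hmA y z this
    · have : d ≤ A y z := by
        by_contra hlt
        exact hy (Relation.ReflTransGen.head (not_le.1 hlt) hz)
      simpa [B, φ, hy, hz] using this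
    · simp [B, φ, hy, hz, hA.1]
  have key := hA2 X Bool A B hA hB φ hφ x x'
  have e1 : φ x = true := by simp [φ, Relation.ReflTransGen.refl]
  have e2 : φ x' = false := by simp [φ, h]
  have hv := hA1 Bool true false ⟨by simp, fun b => by cases b <;> simp⟩ B hB
  rw [e1, e2, hv] at key
  refine le_trans ?_ key
  apply le_max_of_le_right
  simp [B]

/-- Admissible methods satisfy the Property of Influence (P1). -/
theorem property_of_influence
    (H : HCMethod) (hH : IsHCMethod H) (hA1 : AxiomValue H) (hA2 : AxiomTransform H)
    (X : Type) [Fintype X] (A : X → X → ℝ) (hA : IsDissim A)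
    (x x' : X) (hxx : x ≠ x') :
    mlc A ≤ H X A x x' := by
  rcases le_or_gt (mlc A) 0 with h0 | h0
  · exact h0.trans ((hH X A hA).1 x x')
  by_cases h : Relation.ReflTransGen (fun u v => A u v < mlc A) x' x
  · rw [(hH X A hA).2.2.1 x x']
    exact cut_aux H hA1 hA2 X A hA _ h0 x' x (fun h1 => no_reach_aux A h0 x x' hxx h1 h)
  · exact cut_aux H hA1 hA2 X A hA _ h0 x x' h
end
end

section
/- Let H be a hierarchical clustering method satisfying the Axiom of Value (A1) and the Axiom of Transformation (A2). Then for every network (X, A_X), writing u_X = H(X, A_X), for all pairs of nodes x, x' ∈ X it holds that u^NR_X(x,x') ≤ u_X(x,x') ≤ u^R_X(x,x'), where u^NR_X and u^R_X denote the nonreciprocal and reciprocal ultrametrics. -/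
noncomputable section

theorem aux_chainCost_nonneg {X : Type} (A : X → X → ℝ) (l : List X) :
    ∀ x : X, 0 ≤ chainCost A x l := by
  induction l with
  | nil => intro x; simp [chainCost]
  | cons y l ih => intro x; exact le_max_of_le_right (ih y)

theorem aux_chainCost_snoc {X : Type} (A : X → X → ℝ) (w : X) (c : ℝ) (hc : 0 < c) (l : List X) :
    ∀ x z : X, (x :: l).getLast (List.cons_ne_nil x l) = z → chainCost A x l < c → A z w < c →
      chainCost A x (l ++ [w]) < c := by
  induction l with
  | nil =>
    intro x z h1 h2 h3
    simp only [List.getLast_singleton] at h1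
    subst h1
    simp [chainCost, h3, hc]
  | cons y l ih =>
    intro x z h1 h2 h3
    simp only [chainCost, List.cons_append, max_lt_iff] at h2 ⊢
    refine ⟨h2.1, ih y z ?_ h2.2 h3⟩
    rw [List.getLast_cons (List.cons_ne_nil y l)] at h1
    exact h1

theorem aux_bdd {X : Type} (A : X → X → ℝ) (x x' : X) : BddBelow (chainCosts A x x') :=
  ⟨0, by rintro c ⟨l, -, rfl⟩; exact aux_chainCost_nonneg A l x⟩

/-- The two-node dissimilarity on `Bool`. -/
def auxTwo (a b : ℝ) : Bool → Bool → ℝ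
  | true, false => a
  | false, true => b
  | _, _ => 0

theorem auxTwo_dissim {a b : ℝ} (ha : 0 < a) (hb : 0 < b) : IsDissim (auxTwo a b) := by
  constructor
  · rintro (_ | _) (_ | _) <;> simp [auxTwo, ha.le, hb.le]
  · rintro (_ | _) (_ | _) <;> simp [auxTwo, ha.ne', hb.ne']

theorem aux_pos {X : Type} {A : X → X → ℝ} (hA : IsDissim A) {x y : X} (h : x ≠ y) :
    0 < A x y :=
  lt_of_le_of_ne (hA.1 x y) (fun e => h ((hA.2 x y).1 e.symm))

theorem aux_eps {X : Type} [Fintype X] {A : X → X → ℝ} (hA : IsDissim A) :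
    ∃ e : ℝ, 0 < e ∧ ∀ x y, x ≠ y → e ≤ A x y := by
  by_cases h : ∃ p : X × X, p.1 ≠ p.2
  · have hfin : {p : X × X | p.1 ≠ p.2}.Finite := Set.toFinite _
    obtain ⟨p, hp, hmin⟩ := Set.exists_min_image _ (fun p : X × X => A p.1 p.2) hfin h
    exact ⟨A p.1 p.2, aux_pos hA hp, fun x y hxy => hmin (x, y) hxy⟩
  · push Not at h
    exact ⟨1, one_pos, fun x y hxy => absurd (h (x, y)) hxy⟩

theorem aux_lower (H : HCMethod) (hH : IsHCMethod H) (hA1 : AxiomValue H) (hA2 : AxiomTransform H)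
    (X : Type) [Fintype X] (A : X → X → ℝ) (hA : IsDissim A) (x x' : X) :
    minChainCost A x x' ≤ H X A x x' := by
  classical
  rcases le_or_gt (minChainCost A x x') 0 with h0 | h0
  · exact h0.trans ((hH X A hA).1 x x')
  obtain ⟨e, he, hemin⟩ := aux_eps hA
  set d := minChainCost A x x' with hd
  let R : X → Prop := fun z =>
    ∃ l : List X, (x :: l).getLast (List.cons_ne_nil x l) = z ∧ chainCost A x l < d
  have hx : R x := ⟨[], rfl, h0⟩
  have hx' : ¬ R x' := by
    rintro ⟨l, hl, hc⟩
    exact absurd (csInf_le (aux_bdd A x x') ⟨l, hl, rfl⟩) (not_le.2 hc)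
  have hstep : ∀ z w, R z → ¬ R w → d ≤ A z w := by
    rintro z w ⟨l, hl, hc⟩ hw
    by_contra hlt
    exact hw ⟨l ++ [w], by simp, aux_chainCost_snoc A w d h0 l x z hl hc (not_le.1 hlt)⟩
  have hB := auxTwo_dissim h0 he
  have key := hA2 X Bool A (auxTwo d e) hA hB (fun z => decide (R z)) (by
    intro z w
    by_cases hz : R z <;> by_cases hw : R w <;> simp only [hz, hw, decide_true, decide_false, auxTwo]
    · exact hA.1 z w
    · exact hstep z w hz hw
    · exact hemin z w (fun h => hz (h ▸ hw))
    · exact hA.1 z w) x x'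
  simp only [hx, hx', decide_true, decide_false] at key
  rw [hA1 Bool true false ⟨by simp, by intro b; cases b <;> simp⟩ _ hB] at key
  exact (le_max_left _ _).trans key

theorem aux_edge (H : HCMethod) (hH : IsHCMethod H) (hA1 : AxiomValue H) (hA2 : AxiomTransform H)
    (X : Type) [Fintype X] (A : X → X → ℝ) (hA : IsDissim A) (x y : X) :
    H X A x y ≤ max (A x y) (A y x) := by
  by_cases h : x = y
  · rw [((hH X A hA).2.1 x y).2 h]
    exact le_max_of_le_left (hA.1 x y)
  have hB := auxTwo_dissim (aux_pos hA h) (aux_pos hA (Ne.symm h))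
  have key := hA2 Bool X _ A hB hA (fun b => if b then x else y) (by
    rintro (_ | _) (_ | _) <;> simp [auxTwo, (hA.2 _ _).2]) true false
  rw [hA1 Bool true false ⟨by simp, by intro b; cases b <;> simp⟩ _ hB] at key
  simpa [auxTwo] using key

theorem aux_chain {X : Type} {A : X → X → ℝ} {u : X → X → ℝ} (hu : IsUltrametric u)
    (he : ∀ x y, u x y ≤ A x y) (l : List X) :
    ∀ x x' : X, (x :: l).getLast (List.cons_ne_nil x l) = x' → u x x' ≤ chainCost A x l := by
  induction l with
  | nil =>
    intro x x' h
    exact ((hu.2.1 x x').2 h).le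
  | cons y l ih =>
    intro x x' h
    rw [List.getLast_cons (List.cons_ne_nil y l)] at h
    have hrest := ih y x' h
    exact (hu.2.2.2 x y _).trans (max_le_max (he x y) hrest)

/-- Any admissible method lies between nonreciprocal and reciprocal clustering. -/
theorem extremal_ultrametrics
    (H : HCMethod) (hH : IsHCMethod H) (hA1 : AxiomValue H) (hA2 : AxiomTransform H)
    (X : Type) [Fintype X] (A : X → X → ℝ) (hA : IsDissim A) (x x' : X) :
    nonrecipUltra A x x' ≤ H X A x x' ∧ H X A x x' ≤ recipUltra A x x' := by
  constructor
  · refine max_le (aux_lower H hH hA1 hA2 X A hA x x') ?_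
    rw [(hH X A hA).2.2.1 x x']
    exact aux_lower H hH hA1 hA2 X A hA x' x
  · refine le_csInf ⟨_, [x'], by simp, rfl⟩ ?_
    rintro c ⟨l, hl, rfl⟩
    exact aux_chain (hH X A hA) (aux_edge H hH hA1 hA2 X A hA) l x x' hl
end
end

section
/- Let H be a hierarchical clustering method defined on symmetric networks that satisfies the Symmetric Axiom of Value (B1) and the Axiom of Transformation (A2). Then H is equivalent to single linkage: for every symmetric network (X, A_X), writing u_X = H(X, A_X), it holds that u_X(x,x') = u^SL_X(x,x') = ũ*_X(x,x') for all x, x' ∈ X. -/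
noncomputable section

def twoD (α : ℝ) : Bool → Bool → ℝ := fun p q => if p = q then 0 else α

lemma twoD_dissim {α : ℝ} (h : 0 < α) : IsDissim (twoD α) := by
  constructor
  · intro p q
    unfold twoD
    split_ifs
    · exact le_rfl
    · exact h.le
  · intro p q
    unfold twoD
    split_ifs with hpq
    · simp [hpq]
    · simp [hpq, h.ne']

lemma twoD_sym (α : ℝ) : IsSym (twoD α) := by
  intro p q
  simp only [twoD, eq_comm]

lemma chainCost_nonneg {X : Type} {A : X → X → ℝ} (x : X) (l : List X) :
    0 ≤ chainCost A x l := by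
  induction l generalizing x with
  | nil => exact le_rfl
  | cons y l ih => exact (ih y).trans (le_max_right _ _)

lemma le_chainCost {X : Type} {A u : X → X → ℝ} (hu : IsUltrametric u)
    (h : ∀ a b, u a b ≤ A a b) (x : X) (l : List X) :
    u x ((x :: l).getLast (List.cons_ne_nil x l)) ≤ chainCost A x l := by
  induction l generalizing x with
  | nil => exact ((hu.2.1 x x).2 rfl).le
  | cons y l ih =>
    rw [List.getLast_cons (List.cons_ne_nil y l)]
    exact (hu.2.2.2 x y _).trans (max_le_max (h x y) (ih y))

lemma exists_chain {X : Type} {A : X → X → ℝ} {c : ℝ} (hc : 0 ≤ c) {x y : X}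
    (h : Relation.ReflTransGen (fun a b => A a b ≤ c) x y) :
    ∃ l : List X, (x :: l).getLast (List.cons_ne_nil x l) = y ∧ chainCost A x l ≤ c := by
  induction h using Relation.ReflTransGen.head_induction_on with
  | refl => exact ⟨[], rfl, hc⟩
  | head hab _ ih =>
    obtain ⟨l, h1, h2⟩ := ih
    refine ⟨_ :: l, ?_, max_le hab h2⟩
    rw [List.getLast_cons (List.cons_ne_nil _ l)]
    exact h1

/-- On symmetric networks, any method satisfying the Symmetric Axiom of Value
(B1) and the Axiom of Transformation (A2) is single linkage. -/
theorem single_linkage_unique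
    (H : HCMethod)
    (hH : ∀ (X : Type) [Fintype X] (A : X → X → ℝ), IsDissim A → IsSym A →
      IsUltrametric (H X A))
    (hB1 : ∀ (X : Type) [Fintype X] (p q : X), TwoNode p q →
      ∀ A : X → X → ℝ, IsDissim A → IsSym A → H X A p q = A p q)
    (hA2 : ∀ (X Y : Type) [Fintype X] [Fintype Y] (AX : X → X → ℝ) (AY : Y → Y → ℝ),
      IsDissim AX → IsSym AX → IsDissim AY → IsSym AY →
      ∀ φ : X → Y, (∀ x x', AY (φ x) (φ x') ≤ AX x x') →
      ∀ x x' : X, H Y AY (φ x) (φ x') ≤ H X AX x x')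
    (X : Type) [Fintype X] (A : X → X → ℝ) (hA : IsDissim A) (hsym : IsSym A)
    (x x' : X) :
    H X A x x' = minChainCost A x x' := by
  classical
  have hu := hH X A hA hsym
  have hedge : ∀ a b, H X A a b ≤ A a b := by
    intro a b
    by_cases hab : a = b
    · exact ((hu.2.1 a b).2 hab).le.trans (hA.1 a b)
    · have hpos : 0 < A a b :=
        lt_of_le_of_ne (hA.1 a b) (fun h => hab ((hA.2 a b).1 h.symm))
      have h1 := hA2 Bool X (twoD (A a b)) A (twoD_dissim hpos) (twoD_sym _) hA hsym
        (fun t => if t = true then a else b) (by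
          intro s t
          cases s <;> cases t <;>
            simp [twoD, (hA.2 _ _).2, hsym b a]) true false
      have h2 := hB1 Bool true false ⟨by simp, by intro t; cases t <;> simp⟩
        (twoD (A a b)) (twoD_dissim hpos) (twoD_sym _)
      rw [h2] at h1
      simpa [twoD] using h1
  apply le_antisymm
  · apply le_csInf
    · exact ⟨_, [x'], rfl, rfl⟩
    · rintro c ⟨l, rfl, rfl⟩
      exact le_chainCost hu hedge x l
  · by_contra hlt
    obtain ⟨c, hc1, hc2⟩ := exists_between (not_le.1 hlt)
    have hc : 0 < c := (hu.1 x x').trans_lt hc1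
    let R : X → Prop := Relation.ReflTransGen (fun a b => A a b ≤ c) x
    have hx : R x := Relation.ReflTransGen.refl
    have hx' : ¬ R x' := by
      intro h
      obtain ⟨l, h1, h2⟩ := exists_chain hc.le h
      have h3 : minChainCost A x x' ≤ chainCost A x l :=
        csInf_le ⟨0, by rintro _ ⟨l, _, rfl⟩; exact chainCost_nonneg x l⟩ ⟨l, h1, rfl⟩
      linarith
    have hstep : ∀ a b, R a → ¬ R b → c ≤ A a b := by
      intro a b ha hb
      by_contra hlt'
      exact hb (Relation.ReflTransGen.tail ha (not_le.1 hlt').le)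
    have h1 := hA2 X Bool A (twoD c) hA hsym (twoD_dissim hc) (twoD_sym _)
      (fun y => decide (R y)) (by
        intro a b
        by_cases ha : R a <;> by_cases hb : R b
        · simpa [twoD, ha, hb] using hA.1 a b
        · simpa [twoD, ha, hb] using hstep a b ha hb
        · rw [hsym]
          simpa [twoD, ha, hb] using hstep b a hb ha
        · simpa [twoD, ha, hb] using hA.1 a b) x x'
    have h2 := hB1 Bool true false ⟨by simp, by intro t; cases t <;> simp⟩
      (twoD c) (twoD_dissim hc) (twoD_sym _)
    simp only [hx, hx', decide_true, decide_false] at h1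
    rw [h2] at h1
    simp [twoD] at h1
    linarith
end
end

section
/- If a hierarchical clustering method H satisfies the Alternative Axiom of Value (A1'') and the Axiom of Transformation (A2), then H satisfies the Alternative Property of Influence (P1'): for every network (X, A_X) with at least two nodes and all pairs of distinct nodes x ≠ x', the output ultrametric satisfies u_X(x,x') ≥ sep(X, A_X). -/
noncomputable section

/-- Methods satisfying (A1'') and (A2) satisfy the Alternative Property of
Influence (P1'). -/
theorem alternative_property_of_influence
    (H : HCMethod) (hH : IsHCMethod H) (hA1'' : AltAxiomValue H) (hA2 : AxiomTransform H)
    (X : Type) [Fintype X] (A : X → X → ℝ) (hA : IsDissim A)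
    (hn : ∃ a b : X, a ≠ b)
    (x x' : X) (hxx : x ≠ x') :
    sep A ≤ H X A x x' := by
  classical
  have hfin : {c | ∃ x x' : X, x ≠ x' ∧ A x x' = c}.Finite := by
    refine (Set.finite_range (fun p : X × X => A p.1 p.2)).subset ?_
    rintro c ⟨a, b, _, rfl⟩
    exact ⟨(a, b), rfl⟩
  have hne : {c | ∃ x x' : X, x ≠ x' ∧ A x x' = c}.Nonempty := ⟨_, x, x', hxx, rfl⟩
  have hle : ∀ a b : X, a ≠ b → sep A ≤ A a b := fun a b hab =>
    csInf_le hfin.bddBelow ⟨a, b, hab, rfl⟩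
  have hpos : 0 < sep A := by
    obtain ⟨a, b, hab, h⟩ := hne.csInf_mem hfin
    have h' : A a b = sep A := h
    rw [← h']
    exact lt_of_le_of_ne (hA.1 a b) (fun h0 => hab ((hA.2 a b).1 h0.symm))
  let B : Bool → Bool → ℝ := fun i j => if i = j then 0 else sep A
  have hB : IsDissim B := by
    refine ⟨fun i j => ?_, fun i j => ?_⟩
    · by_cases h : i = j
      · simp [B, h]
      · simp [B, h, hpos.le]
    · by_cases h : i = j
      · simp [B, h]
      · simp [B, h, hpos.ne']
  have h1 := hA2 X Bool A B hA hB (fun y => decide (y = x)) (by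
    intro a b
    by_cases h : decide (a = x) = decide (b = x)
    · simp only [B, h, if_true]
      exact hA.1 a b
    · simp only [B, h, if_false]
      exact hle a b (fun hab => h (by rw [hab]))) x x'
  have h2 := hA1'' Bool true false ⟨by simp, fun y => by cases y <;> simp⟩ B hB
  have e2 : decide (x' = x) = false := by simp [hxx.symm]
  simp only [e2, decide_true] at h1
  rw [h2] at h1
  simpa [B] using h1
end
end

section
/- Let (X, A_X) be a network, δ > 0, and let Z be the set of equivalence classes of X under the relation x ∼ x' iff u^U_X(x,x') ≤ δ, where u^U_X is the unilateral ultrametric. Endow Z with the dissimilarity A_Z(z,z') = min over x in the class z and x' in the class z' of A_X(x,x') for z ≠ z', and A_Z(z,z) = 0. If Z has at least two elements, then the separation of the quotient network satisfies sep(Z, A_Z) > δ. -/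
noncomputable section

/-- The quotient network of unilateral equivalence classes at resolution `δ`
has separation greater than `δ`. -/
theorem quotient_sep_gt_delta
    (X : Type) [Fintype X] (A : X → X → ℝ) (hA : IsDissim A)
    (δ : ℝ) (hδ : 0 < δ) (s : Setoid X)
    (hs : ∀ x x' : X, s.r x x' ↔ uniUltra A x x' ≤ δ)
    (AZ : Quotient s → Quotient s → ℝ)
    (hAZ : ∀ z z' : Quotient s, z ≠ z' →
      AZ z z' = sInf {c | ∃ x x' : X,
        Quotient.mk s x = z ∧ Quotient.mk s x' = z' ∧ A x x' = c})
    (hAZ0 : ∀ z : Quotient s, AZ z z = 0)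
    (hZ : ∃ z z' : Quotient s, z ≠ z') :
    δ < sep AZ := by
  have hnn : ∀ (l : List X) (x : X),
      0 ≤ chainCost (fun a b => min (A a b) (A b a)) x l := by
    intro l
    induction l with
    | nil => intro x; simp [chainCost]
    | cons y l ih => intro x; exact le_trans (ih y) (le_max_right _ _)
  have hle : ∀ x x' : X, uniUltra A x x' ≤ A x x' := by
    intro x x'
    have hb : BddBelow (chainCosts (fun a b => min (A a b) (A b a)) x x') :=
      ⟨0, by rintro c ⟨l, -, rfl⟩; exact hnn l x⟩
    refine le_trans (csInf_le hb ⟨[x'], by simp, rfl⟩) ?_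
    exact max_le (min_le_left _ _) (hA.1 x x')
  have hlt : ∀ z z' : Quotient s, z ≠ z' → δ < AZ z z' := by
    intro z z' hne
    rw [hAZ z z' hne]
    have hfin : {c | ∃ x x' : X,
        Quotient.mk s x = z ∧ Quotient.mk s x' = z' ∧ A x x' = c}.Finite := by
      refine (Set.finite_range (fun p : X × X => A p.1 p.2)).subset ?_
      rintro c ⟨x, x', -, -, rfl⟩
      exact ⟨(x, x'), rfl⟩
    have hne' : {c | ∃ x x' : X,
        Quotient.mk s x = z ∧ Quotient.mk s x' = z' ∧ A x x' = c}.Nonempty := by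
      obtain ⟨x, hx⟩ := Quotient.exists_rep z
      obtain ⟨x', hx'⟩ := Quotient.exists_rep z'
      exact ⟨A x x', x, x', hx, hx', rfl⟩
    obtain ⟨x, x', hx, hx', hc⟩ := hne'.csInf_mem hfin
    rw [← hc]
    by_contra hcon
    apply hne
    rw [← hx, ← hx']
    exact Quotient.sound ((hs x x').2 ((hle x x').trans (not_lt.1 hcon)))
  have hfinZ : {c | ∃ z z' : Quotient s, z ≠ z' ∧ AZ z z' = c}.Finite := by
    have : Finite (Quotient s) := Quotient.finite s
    refine (Set.finite_range (fun p : Quotient s × Quotient s => AZ p.1 p.2)).subset ?_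
    rintro c ⟨x, x', -, rfl⟩
    exact ⟨(x, x'), rfl⟩
  have hneZ : {c | ∃ z z' : Quotient s, z ≠ z' ∧ AZ z z' = c}.Nonempty := by
    obtain ⟨z, z', h⟩ := hZ
    exact ⟨_, z, z', h, rfl⟩
  obtain ⟨z, z', h, hc⟩ := hneZ.csInf_mem hfinZ
  unfold sep
  rw [← hc]
  exact hlt z z' h
end
end
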